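/- If F is continuous in a neighborhood of μ_τ(F) for a given τ ∈ (0,1), then τ ↦ μ_τ(F) is differentiable at τ with derivative ∂_τ μ_τ(F) = (∫_{μ_τ}^∞ (1−F(y)) dy + ∫_{−∞}^{μ_τ} F(y) dy) / (τ(1−F(μ_τ)) + (1−τ)F(μ_τ)). -/

import Mathlib

open MeasureTheory Filter Set Asymptotics

noncomputable def ident (τ x y : ℝ) : ℝ :=
  if x ≤ y then τ * (y - x) else -((1 - τ) * (x - y))

noncomputable def score (τ x y : ℝ) : ℝ :=
  τ / 2 * ((max (y - x) 0) ^ 2 - (max y 0) ^ 2) +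
    (1 - τ) / 2 * ((max (x - y) 0) ^ 2 - (max (-y) 0) ^ 2)

/-! Since `ident τ x y = ((y - x) + (2 * τ - 1) * |x - y|) / 2`, the `τ`-expectile is the fixed
point of `x ↦ E Y + (2 * τ - 1) * A x`, where `A x = E|x - Y|`. As `A` is 1-Lipschitz and
`|2 * τ - 1| < 1`, this map is a contraction, so its fixed point depends continuously on `τ`. If `F`
is continuous at `μ τ`, then `A' = 2 * F - 1` there, and implicit differentiation of the fixed-point
equation gives `μ' = 2 * A / (1 - (2 * τ - 1) * (2 * F - 1))`. Its denominator is
`2 * (τ * (1 - F) + (1 - τ) * F)`, and the layer-cake formula turns `A (μ τ)` into the sum of the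
two tail integrals of `F`. -/

open scoped Topology NNReal

section FixedPoint

theorem continuousAt_of_eq_add_smul {X 𝕜 E : Type*} [TopologicalSpace X] [NormedField 𝕜]
    [NormedAddCommGroup E] [NormedSpace 𝕜 E] {κ : X → 𝕜} {g : E → E} {x : X → E} {m : E} {a : X}
    {K : ℝ≥0} (hg : LipschitzWith K g) (hκ : ContinuousAt κ a) (hK : ‖κ a‖₊ * K < 1)
    (hx : ∀ᶠ s in 𝓝 a, x s = m + κ s • g (x s)) : ContinuousAt x a := by
  have hlt : ∀ᶠ s in 𝓝 a, ‖κ s‖₊ * K < 1 :=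
    (hκ.nnnorm.mul continuousAt_const).eventually_lt_const hK
  have hle : ∀ᶠ s in 𝓝 a,
      dist (x s) (x a) ≤ dist (x a) (m + κ s • g (x a)) / (1 - ‖κ s‖ * K) := by
    filter_upwards [hlt, hx] with s hs hxs
    have hcontr : ContractingWith (‖κ s‖₊ * K) fun y => m + κ s • g y :=
      ⟨hs, by simpa using (LipschitzWith.const m).add ((lipschitzWith_smul (κ s)).comp hg)⟩
    simpa [dist_comm] using hcontr.dist_le_of_fixedPoint (x a) hxs.symm
  have hne : 1 - ‖κ a‖ * K ≠ 0 := (sub_pos.2 (mod_cast hK)).ne'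
  have hbound : ContinuousAt (fun s => dist (x a) (m + κ s • g (x a)) / (1 - ‖κ s‖ * K)) a := by
    fun_prop (disch := exact hne)
  rw [ContinuousAt, tendsto_iff_dist_tendsto_zero]
  refine squeeze_zero' (.of_forall fun _ => dist_nonneg) hle ?_
  simpa [← hx.self_of_nhds] using hbound.tendsto

variable {𝕜 : Type*} [NontriviallyNormedField 𝕜] {κ g x : 𝕜 → 𝕜} {m κ' g' a : 𝕜}

theorem hasDerivAt_of_eq_add_mul (hκ : HasDerivAt κ κ' a) (hg : HasDerivAt g g' (x a))
    (hcont : ContinuousAt x a) (hne : 1 - κ a * g' ≠ 0)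
    (hx : ∀ᶠ s in 𝓝 a, x s = m + κ s * g (x s)) :
    HasDerivAt x (κ' * g (x a) / (1 - κ a * g')) a := by
  have hslope : ContinuousAt (fun s => dslope g (x a) (x s)) a :=
    (continuousAt_dslope_same.2 hg.differentiableAt).comp hcont
  have hden : Tendsto (fun s => 1 - κ s * dslope g (x a) (x s)) (𝓝 a) (𝓝 (1 - κ a * g')) := by
    simpa [hg.deriv] using
      (tendsto_const_nhds (x := (1 : 𝕜))).sub (hκ.continuousAt.tendsto.mul hslope.tendsto)
  have hsub : ∀ᶠ s in 𝓝 a,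
      (x s - x a) * (1 - κ s * dslope g (x a) (x s)) = (κ s - κ a) * g (x a) := by
    filter_upwards [hx] with s hs
    have hg_sub : (x s - x a) * dslope g (x a) (x s) = g (x s) - g (x a) := sub_smul_dslope g _ _
    linear_combination hs - hx.self_of_nhds - κ s * hg_sub
  rw [hasDerivAt_iff_tendsto_slope] at hκ ⊢
  refine ((hκ.mul_const (g (x a))).div (hden.mono_left nhdsWithin_le_nhds) hne).congr' ?_
  filter_upwards [(hsub.and (hden.eventually_ne hne)).filter_mono nhdsWithin_le_nhds]
    with s ⟨hs, hs_ne⟩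
  rw [Pi.div_apply, div_eq_iff hs_ne, slope_def_field, slope_def_field, div_mul_eq_mul_div,
    div_mul_eq_mul_div, hs]

theorem hasDerivAt_of_eq_add_mul_of_lipschitzWith {K : ℝ≥0} (hgK : LipschitzWith K g)
    (hK : ‖κ a‖₊ * K < 1) (hκ : HasDerivAt κ κ' a) (hg : HasDerivAt g g' (x a))
    (hx : ∀ᶠ s in 𝓝 a, x s = m + κ s * g (x s)) :
    HasDerivAt x (κ' * g (x a) / (1 - κ a * g')) a := by
  refine hasDerivAt_of_eq_add_mul hκ hg
    (continuousAt_of_eq_add_smul hgK hκ.continuousAt hK hx) ?_ hx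
  have hg' : ‖g'‖ ≤ K := hg.le_of_lipschitz hgK
  have hlt : ‖κ a * g'‖ < 1 := calc
    ‖κ a * g'‖ = ‖κ a‖ * ‖g'‖ := norm_mul ..
    _ ≤ ‖κ a‖ * K := by gcongr
    _ < 1 := mod_cast hK
  intro h
  rw [← sub_eq_zero.1 h, norm_one] at hlt
  exact hlt.false

end FixedPoint

section Distribution

variable {Ω : Type*} [MeasurableSpace Ω] {P : Measure Ω} {Y : Ω → ℝ} {c : ℝ}

theorem probReal_lt_eq_one_sub [IsProbabilityMeasure P] (hY : AEMeasurable Y P) (c : ℝ) :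
    P.real {ω | c < Y ω} = 1 - P.real {ω | Y ω ≤ c} := by
  rw [← probReal_compl_eq_one_sub₀ (nullMeasurableSet_le hY aemeasurable_const)]
  simp only [compl_ofPred, not_le]

theorem ae_ne_of_continuousAt_measureReal_le [IsFiniteMeasure P] (hY : AEMeasurable Y P)
    (hc : ContinuousAt (fun y => P.real {ω | Y ω ≤ y}) c) : ∀ᵐ ω ∂P, Y ω ≠ c := by
  have hle : ∀ y < c, P.real {ω | Y ω = c} ≤ P.real {ω | Y ω ≤ c} - P.real {ω | Y ω ≤ y} := by
    intro y hy
    have hdisj : Disjoint {ω | Y ω = c} {ω | Y ω ≤ y} :=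
      Set.disjoint_left.2 fun ω (hω : Y ω = c) => by simpa [hω] using hy
    rw [le_sub_iff_add_le, ← measureReal_union₀
      (nullMeasurableSet_le hY aemeasurable_const) hdisj.aedisjoint]
    exact measureReal_mono (union_subset (fun ω => le_of_eq) fun ω hω => le_trans hω hy.le)
  have hlim : Tendsto (fun y => P.real {ω | Y ω ≤ c} - P.real {ω | Y ω ≤ y}) (𝓝[<] c) (𝓝 0) := by
    simpa using (hc.tendsto.const_sub (P.real {ω | Y ω ≤ c})).mono_left nhdsWithin_le_nhds
  have hzero : P.real {ω | Y ω = c} ≤ 0 :=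
    ge_of_tendsto hlim (by filter_upwards [self_mem_nhdsWithin] with y hy using hle y hy)
  simpa [ae_iff] using (measureReal_eq_zero_iff).1 (hzero.antisymm measureReal_nonneg)

theorem setIntegral_Ioi_measureReal_lt (h : Integrable (fun ω => max (Y ω - c) 0) P) :
    ∫ y in Ioi c, P.real {ω | y < Y ω} = ∫ ω, max (Y ω - c) 0 ∂P := by
  have hshift : ∫ t in Ioi 0, P.real {ω | t + c < Y ω} = ∫ y in Ioi c, P.real {ω | y < Y ω} := by
    simpa using (measurePreserving_add_right volume c).setIntegral_preimage_emb
      (measurableEmbedding_addRight c) (fun y => P.real {ω | y < Y ω}) (Ioi c)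
  rw [h.integral_eq_integral_meas_lt (.of_forall fun _ => le_max_right _ _), ← hshift]
  refine setIntegral_congr_fun measurableSet_Ioi fun t (ht : 0 < t) => ?_
  simp only [lt_max_iff, ht.not_gt, or_false, lt_sub_iff_add_lt]

theorem setIntegral_Iic_measureReal_le (h : Integrable (fun ω => max (c - Y ω) 0) P) :
    ∫ y in Iic c, P.real {ω | Y ω ≤ y} = ∫ ω, max (c - Y ω) 0 ∂P := by
  have hshift : ∫ t in Ioi 0, P.real {ω | Y ω ≤ c - t} = ∫ y in Iio c, P.real {ω | Y ω ≤ y} := by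
    simpa using (volume.measurePreserving_sub_left c).setIntegral_preimage_emb
      (measurableEmbedding_subLeft c) (fun y => P.real {ω | Y ω ≤ y}) (Iio c)
  rw [h.integral_eq_integral_meas_le (.of_forall fun _ => le_max_right _ _),
    integral_Iic_eq_integral_Iio, ← hshift]
  refine setIntegral_congr_fun measurableSet_Ioi fun t (ht : 0 < t) => ?_
  simp only [le_max_iff, ht.not_ge, or_false, le_sub_comm]

end Distribution

/-- The mean absolute deviation `E|x - Y|` of the random variable `Y` about the point `x`, through
which, apart from the mean of `Y`, the expectiles depend on the law of `Y`. -/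
noncomputable def meanAbsDev {Ω : Type*} [MeasurableSpace Ω] (P : Measure Ω) (Y : Ω → ℝ) (x : ℝ) :
    ℝ :=
  ∫ ω, |x - Y ω| ∂P

section MeanAbsDev

variable {Ω : Type*} [MeasurableSpace Ω] {P : Measure Ω} {Y : Ω → ℝ} {c : ℝ}

theorem integrable_abs_sub [IsFiniteMeasure P] (hY : Integrable Y P) (x : ℝ) :
    Integrable (fun ω => |x - Y ω|) P :=
  ((integrable_const x).sub hY).abs

theorem lipschitzWith_meanAbsDev [IsProbabilityMeasure P] (hY : Integrable Y P) :
    LipschitzWith 1 (meanAbsDev P Y) := by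
  refine LipschitzWith.of_le_add fun x y => ?_
  calc
    meanAbsDev P Y x ≤ ∫ ω, (|y - Y ω| + dist x y) ∂P :=
      integral_mono (integrable_abs_sub hY x) ((integrable_abs_sub hY y).add (integrable_const _))
        fun ω => by simpa [Real.dist_eq, add_comm] using abs_sub_le x y (Y ω)
    _ = meanAbsDev P Y y + dist x y := by
      simp [integral_add (integrable_abs_sub hY y) (integrable_const _), meanAbsDev]

theorem hasDerivAt_meanAbsDev [IsFiniteMeasure P] (hY : Integrable Y P)
    (hc : ∀ᵐ ω ∂P, Y ω ≠ c) :
    HasDerivAt (meanAbsDev P Y) (P.real {ω | Y ω ≤ c} - P.real {ω | c < Y ω}) c := by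
  have hle : NullMeasurableSet {ω | Y ω ≤ c} P :=
    nullMeasurableSet_le hY.aemeasurable aemeasurable_const
  have hlt : NullMeasurableSet {ω | c < Y ω} P :=
    nullMeasurableSet_lt aemeasurable_const hY.aemeasurable
  have hle_int := (integrable_const (μ := P) (1 : ℝ)).indicator₀ hle
  have hlt_int := (integrable_const (μ := P) (1 : ℝ)).indicator₀ hlt
  have hintegral : ∫ ω, ({ω | Y ω ≤ c}.indicator (fun _ => (1 : ℝ)) ω -
      {ω | c < Y ω}.indicator (fun _ => 1) ω) ∂P =
      P.real {ω | Y ω ≤ c} - P.real {ω | c < Y ω} := by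
    simp [integral_sub hle_int hlt_int, integral_indicator₀ hle, integral_indicator₀ hlt]
  rw [← hintegral]
  refine (hasDerivAt_integral_of_dominated_loc_of_lip (bound := fun _ => 1) univ_mem
    (.of_forall fun x => (integrable_abs_sub hY x).aestronglyMeasurable) (integrable_abs_sub hY c)
    (hle_int.sub hlt_int).aestronglyMeasurable (.of_forall fun ω => ?_) (integrable_const _) ?_).2
  · refine (LipschitzWith.of_dist_le_mul fun x y => ?_).lipschitzOnWith
    simpa [Real.dist_eq] using abs_abs_sub_abs_le_abs_sub (x - Y ω) (y - Y ω)
  · filter_upwards [hc] with ω hω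
    convert (hasDerivAt_abs (sub_ne_zero.2 hω.symm)).comp_sub_const c (Y ω) using 1
    rcases hω.lt_or_gt with h | h
    · simp [indicator, h.le, h.not_gt, sign_pos (sub_pos.2 h)]
    · simp [indicator, h, h.not_ge, sign_neg (sub_neg.2 h)]

theorem meanAbsDev_eq_setIntegral_add_setIntegral [IsProbabilityMeasure P] (hY : Integrable Y P)
    (c : ℝ) :
    meanAbsDev P Y c =
      (∫ y in Ioi c, (1 - P.real {ω | Y ω ≤ y})) + ∫ y in Iic c, P.real {ω | Y ω ≤ y} := by
  have hupper : Integrable (fun ω => max (Y ω - c) 0) P := (hY.sub (integrable_const c)).pos_part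
  have hlower : Integrable (fun ω => max (c - Y ω) 0) P := ((integrable_const c).sub hY).pos_part
  simp_rw [← probReal_lt_eq_one_sub hY.aemeasurable]
  rw [setIntegral_Ioi_measureReal_lt hupper, setIntegral_Iic_measureReal_le hlower,
    ← integral_add hupper hlower, meanAbsDev]
  refine integral_congr_ae (.of_forall fun ω => ?_)
  simpa [abs_sub_comm] using (max_zero_add_max_neg_zero_eq_abs_self (Y ω - c)).symm

end MeanAbsDev

theorem ident_eq (t x y : ℝ) : ident t x y = ((y - x) + (2 * t - 1) * |x - y|) / 2 := by
  unfold ident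
  split_ifs with h
  · rw [abs_of_nonpos (sub_nonpos.2 h)]; ring
  · rw [abs_of_pos (sub_pos.2 (not_le.1 h))]; ring

theorem integral_ident_eq_zero_iff {Ω : Type*} [MeasurableSpace Ω] {P : Measure Ω}
    [IsProbabilityMeasure P] {Y : Ω → ℝ} (hY : Integrable Y P) (t x : ℝ) :
    ∫ ω, ident t x (Y ω) ∂P = 0 ↔ x = ∫ ω, Y ω ∂P + (2 * t - 1) * meanAbsDev P Y x := by
  have heq : ∫ ω, ident t x (Y ω) ∂P =
      ((∫ ω, Y ω ∂P - x) + (2 * t - 1) * meanAbsDev P Y x) / 2 := by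
    have hsub : Integrable (fun ω => Y ω - x) P := hY.sub (integrable_const x)
    simp_rw [ident_eq]
    rw [integral_div, integral_add hsub ((integrable_abs_sub hY x).const_mul _),
      integral_sub hY (integrable_const x), integral_const_mul]
    simp [meanAbsDev]
  rw [heq]
  constructor <;> intro h <;> linarith

theorem expectile_hasDerivAt_general
    {Ω : Type*} [MeasurableSpace Ω] (P : Measure Ω) [IsProbabilityMeasure P]
    (Y : Ω → ℝ) (hY : Integrable Y P)
    (F : ℝ → ℝ) (hF : ∀ y, F y = (P {ω | Y ω ≤ y}).toReal)
    (μ : ℝ → ℝ) (τ : ℝ) (hτ : τ ∈ Set.Ioo (0 : ℝ) 1)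
    (hμ : ∀ᶠ s in 𝓝 τ, ∫ ω, ident s (μ s) (Y ω) ∂P = 0)
    (hcont : ContinuousAt F (μ τ)) :
    HasDerivAt μ
      (((∫ y in Set.Ioi (μ τ), (1 - F y)) + ∫ y in Set.Iic (μ τ), F y) /
        (τ * (1 - F (μ τ)) + (1 - τ) * F (μ τ))) τ := by
  obtain rfl : F = fun y => P.real {ω | Y ω ≤ y} := funext hF
  have hfix : ∀ᶠ s in 𝓝 τ, μ s = ∫ ω, Y ω ∂P + (2 * s - 1) * meanAbsDev P Y (μ s) :=
    hμ.mono fun s => (integral_ident_eq_zero_iff hY s (μ s)).1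
  have hcontr : ‖2 * τ - 1‖₊ * 1 < 1 := by
    rw [mul_one, ← NNReal.coe_lt_coe, coe_nnnorm, Real.norm_eq_abs, NNReal.coe_one, abs_lt]
    constructor <;> linarith [hτ.1, hτ.2]
  have hcoeff : HasDerivAt (fun s : ℝ => 2 * s - 1) 2 τ := by
    simpa using ((hasDerivAt_id τ).const_mul 2).sub_const 1
  have hdev := hasDerivAt_meanAbsDev hY (ae_ne_of_continuousAt_measureReal_le hY.aemeasurable hcont)
  rw [probReal_lt_eq_one_sub hY.aemeasurable] at hdev
  refine (hasDerivAt_of_eq_add_mul_of_lipschitzWith (κ := fun s => 2 * s - 1)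
    (lipschitzWith_meanAbsDev hY) hcontr hcoeff hdev hfix).congr_deriv ?_
  have hden (p : ℝ) : 1 - (2 * τ - 1) * (p - (1 - p)) = 2 * (τ * (1 - p) + (1 - τ) * p) := by ring
  rw [meanAbsDev_eq_setIntegral_add_setIntegral hY, hden, mul_div_mul_left _ _ two_ne_zero]

theorem expectile_hasDerivAt
    {Ω : Type*} [MeasurableSpace Ω] (P : Measure Ω) [IsProbabilityMeasure P]
    (Y : Ω → ℝ) (hY : Integrable Y P)
    (F : ℝ → ℝ) (hF : ∀ y, F y = (P {ω | Y ω ≤ y}).toReal)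
    (μ : ℝ → ℝ) (hμ : ∀ τ ∈ Set.Ioo (0:ℝ) 1, ∫ ω, ident τ (μ τ) (Y ω) ∂P = 0)
    (τ : ℝ) (hτ : τ ∈ Set.Ioo (0:ℝ) 1)
    (hcont : ∃ ε > 0, ContinuousOn F (Set.Ioo (μ τ - ε) (μ τ + ε))) :
    HasDerivAt μ
      (((∫ y in Set.Ioi (μ τ), (1 - F y)) + ∫ y in Set.Iic (μ τ), F y) /
        (τ * (1 - F (μ τ)) + (1 - τ) * F (μ τ))) τ := by
  obtain ⟨ε, hε, hF_cont⟩ := hcont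
  exact expectile_hasDerivAt_general P Y hY F hF μ τ hτ 
    (eventually_of_mem (Ioo_mem_nhds hτ.1 hτ.2) hμ)
    (hF_cont.continuousAt (Ioo_mem_nhds (sub_lt_self _ hε) (lt_add_of_pos_right _ hε)))
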